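/- The group G(3;2) is isomorphic to the Artin braid group B(3) on three strings, i.e., to the group with two generators x, y and the single relation xyx = yxy. -/

import Mathlib

/-- The word `a_{p-1} a_{p-2} ⋯ a_0` in the free group on `Option ℤ`,
where `some k` stands for the generator `a k` and `none` stands for `ω`. -/
def omegaWord (p : ℕ) : FreeGroup (Option ℤ) :=
  ((List.range p).reverse.map (fun i => FreeGroup.of (some (i : ℤ)))).prod

/-- The relators of the group `G(p;q)`:
`ω = a_{p-1}⋯a_0`, `a_{k+q} = a_k` and `a_{k+p} = ω a_k ω⁻¹` for all `k ∈ ℤ`. -/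
def gRels (p q : ℕ) : Set (FreeGroup (Option ℤ)) :=
  {FreeGroup.of none * (omegaWord p)⁻¹} ∪
    (⋃ k : ℤ, {FreeGroup.of (some (k + (q : ℤ))) * (FreeGroup.of (some k))⁻¹}) ∪
    (⋃ k : ℤ, {FreeGroup.of (some (k + (p : ℤ))) *
      (FreeGroup.of none * FreeGroup.of (some k) * (FreeGroup.of none)⁻¹)⁻¹})

/-- The group `G(p;q)`. -/
abbrev Gpq (p q : ℕ) : Type := PresentedGroup (gRels p q)

/-- The braid relator `x y x (y x y)⁻¹` on two generators. -/
def braidRels : Set (FreeGroup Bool) :=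
  {FreeGroup.of true * FreeGroup.of false * FreeGroup.of true *
    (FreeGroup.of false * FreeGroup.of true * FreeGroup.of false)⁻¹}

/-- The Artin braid group `B(3)` on three strings, presented by two generators `x`, `y`
and the single relation `x y x = y x y`. -/
abbrev BraidThree : Type := PresentedGroup braidRels

/-!
For `p = 2 * m + 1`, the relations `a (k + 2) = a k` leave two generators `x = a 0` and `y = a 1`,
the first relation makes `ω` the alternating word `x y x ⋯ x` of length `p`, and the conjugation
relations say that conjugation by `ω` exchanges `x` and `y`. Since `y ω = (y x y ⋯ y) x`, the
equation `ω x = y ω` is equivalent to `x y x ⋯ x = y x y ⋯ y`, and by symmetry this also gives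
`ω y = x ω`. So `G(2 * m + 1; 2)` is the Artin group with this one relation, which for `m = 1` is
the braid relation.
-/

section Alternate

variable {α : Type*}

/-- The two-sided sequence `…, x, y, x, y, …` with `x` at the even indices. It describes where a
homomorphism from a group `G(p;2)` sends the generators `a k`. -/
def alternate (x y : α) (k : ℤ) : α := if Even k then x else y

theorem alternate_of_even (x y : α) {k : ℤ} (hk : Even k) : alternate x y k = x := if_pos hk

theorem alternate_of_odd (x y : α) {k : ℤ} (hk : Odd k) : alternate x y k = y :=
  if_neg (Int.not_even_iff_odd.2 hk)

theorem alternate_periodic (x y : α) : Function.Periodic (alternate x y) 2 := fun k => by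
  simp [alternate]

theorem eq_alternate_of_periodic {a : ℤ → α} (ha : Function.Periodic a 2) :
    a = alternate (a 0) (a 1) := by
  ext k
  obtain ⟨n, rfl | rfl⟩ := Int.even_or_odd' k
  · rw [alternate_of_even _ _ (even_two_mul n), mul_comm]
    exact ha.int_mul_eq n
  · rw [alternate_of_odd _ _ (odd_two_mul_add_one n), mul_comm, add_comm]
    exact ha.int_mul n 1

theorem prod_reverse_range_alternate {M : Type*} [Monoid M] (x y : M) (m : ℕ) :
    ((List.range (2 * m + 1)).reverse.map fun i : ℕ => alternate x y i).prod =
      (x * y) ^ m * x := by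
  induction m with
  | zero => simp [alternate]
  | succ m ih =>
    have h_even : alternate x y (2 * m + 2 : ℕ) = x := alternate_of_even x y ⟨m + 1, by grind⟩
    have h_odd : alternate x y (2 * m + 1 : ℕ) = y := alternate_of_odd x y ⟨m, by grind⟩
    rw [show 2 * (m + 1) + 1 = 2 * m + 1 + 1 + 1 by ring, List.range_succ, List.range_succ]
    simp only [List.reverse_append, List.reverse_singleton, List.map_append, List.map_singleton,
      List.prod_append, List.prod_singleton, ih, h_even, h_odd, pow_succ', mul_assoc]

end Alternate

section Semiconj

variable {H : Type*} [Group H] {x y : H} {m : ℕ}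

theorem semiconjBy_mul_pow_mul_iff :
    SemiconjBy ((x * y) ^ m * x) x y ↔ (x * y) ^ m * x = (y * x) ^ m * y := by
  rw [SemiconjBy, ← mul_assoc y, ← mul_pow_mul, mul_left_inj]

theorem semiconjBy_alternate (h : (x * y) ^ m * x = (y * x) ^ m * y) (k : ℤ) :
    SemiconjBy ((x * y) ^ m * x) (alternate x y k) (alternate x y (k + (2 * m + 1))) := by
  have h_odd : Odd (2 * m + 1 : ℤ) := odd_two_mul_add_one _
  rcases Int.even_or_odd k with hk | hk
  · rw [alternate_of_even x y hk, alternate_of_odd x y (hk.add_odd h_odd)]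
    exact semiconjBy_mul_pow_mul_iff.2 h
  · rw [alternate_of_odd x y hk, alternate_of_even x y (hk.add_odd h_odd), h]
    exact semiconjBy_mul_pow_mul_iff.2 h.symm

end Semiconj

theorem lift_presentedGroup_of_eq_one {α : Type*} {rels : Set (FreeGroup α)} :
    ∀ r ∈ rels, FreeGroup.lift (PresentedGroup.of (rels := rels)) r = 1 := by
  have h_mk : FreeGroup.lift (PresentedGroup.of (rels := rels)) = PresentedGroup.mk rels := by
    ext; simp [PresentedGroup.of]
  exact fun r hr => h_mk ▸ PresentedGroup.one_of_mem hr

namespace Gpq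

variable {H : Type*} [Group H] {p q : ℕ}

theorem lift_gRels_eq_one_iff {f : Option ℤ → H} :
    (∀ r ∈ gRels p q, FreeGroup.lift f r = 1) ↔
      f none = ((List.range p).reverse.map fun i : ℕ => f (some i)).prod ∧
      Function.Periodic (fun k => f (some k)) q ∧
      ∀ k : ℤ, SemiconjBy (f none) (f (some k)) (f (some (k + p))) := by
  have h_word : FreeGroup.lift f (omegaWord p) =
      ((List.range p).reverse.map fun i : ℕ => f (some i)).prod := by
    simp [omegaWord, map_list_prod, Function.comp_def, ← List.map_eq_flatMap]
  simp only [gRels, Set.iUnion_singleton_eq_range, Set.mem_union, or_imp, forall_and,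
    Set.mem_singleton_iff, forall_eq, Set.forall_mem_range, map_mul, map_inv,
    FreeGroup.lift_apply_of, mul_inv_eq_one, h_word, and_assoc]
  simp only [Function.Periodic, SemiconjBy, eq_comm (a := f none * _), ← eq_mul_inv_iff_mul_eq]

/-- The generator `ω` of `G(p;q)`. -/
def omega : Gpq p q := PresentedGroup.of none

/-- The generator `a k` of `G(p;q)`. -/
def gen (k : ℤ) : Gpq p q := PresentedGroup.of (some k)

theorem omega_eq_prod :
    (omega : Gpq p q) = ((List.range p).reverse.map fun i : ℕ => gen i).prod :=
  (lift_gRels_eq_one_iff.1 lift_presentedGroup_of_eq_one).1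

theorem gen_periodic : Function.Periodic (gen : ℤ → Gpq p q) q :=
  (lift_gRels_eq_one_iff.1 lift_presentedGroup_of_eq_one).2.1

theorem semiconjBy_omega (k : ℤ) : SemiconjBy (omega : Gpq p q) (gen k) (gen (k + p)) :=
  (lift_gRels_eq_one_iff.1 lift_presentedGroup_of_eq_one).2.2 k

/-- The homomorphism out of `G(p;q)` that sends `ω` to `w` and the generator `gen k` to `a k`. -/
def lift (w : H) (a : ℤ → H) (h_prod : w = ((List.range p).reverse.map fun i : ℕ => a i).prod)
    (h_periodic : Function.Periodic a q) (h_conj : ∀ k : ℤ, SemiconjBy w (a k) (a (k + p))) :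
    Gpq p q →* H :=
  PresentedGroup.toGroup (f := fun o => o.elim w a)
    (lift_gRels_eq_one_iff.2 ⟨h_prod, h_periodic, h_conj⟩)

theorem lift_gen {w : H} {a : ℤ → H}
    (h_prod : w = ((List.range p).reverse.map fun i : ℕ => a i).prod)
    (h_periodic : Function.Periodic a q) (h_conj : ∀ k : ℤ, SemiconjBy w (a k) (a (k + p)))
    (k : ℤ) : lift w a h_prod h_periodic h_conj (gen k) = a k := by
  simp only [lift, gen, PresentedGroup.toGroup.of, Option.elim_some]

theorem hom_ext {φ ψ : Gpq p q →* H} (h : ∀ k, φ (gen k) = ψ (gen k)) : φ = ψ := by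
  apply PresentedGroup.ext
  rintro (_ | k)
  · change φ omega = ψ omega
    simp only [omega_eq_prod, map_list_prod, List.map_map, Function.comp_def, h]
  · exact h k

theorem gen_eq_alternate : (gen : ℤ → Gpq p 2) = alternate (gen 0) (gen 1) :=
  eq_alternate_of_periodic gen_periodic

variable {m : ℕ}

theorem omega_eq_mul_pow_mul :
    (omega : Gpq (2 * m + 1) 2) = (gen 0 * gen 1) ^ m * gen 0 := by
  rw [omega_eq_prod, ← prod_reverse_range_alternate, ← gen_eq_alternate]

theorem gen_artin_relation :
    (gen 0 * gen 1 : Gpq (2 * m + 1) 2) ^ m * gen 0 = (gen 1 * gen 0) ^ m * gen 1 := by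
  have h_odd : (gen (0 + (2 * m + 1 : ℕ)) : Gpq (2 * m + 1) 2) = gen 1 := by
    rw [gen_eq_alternate]
    exact alternate_of_odd _ _ ⟨m, by grind⟩
  rw [← semiconjBy_mul_pow_mul_iff, ← omega_eq_mul_pow_mul, ← h_odd]
  exact semiconjBy_omega 0

end Gpq

/-- The relator `(x y) ^ m x ((y x) ^ m y)⁻¹` of the Artin group of the dihedral type
`I₂(2 * m + 1)`, with `x` and `y` indexed by `true` and `false` as in `braidRels`. -/
def oddDihedralRels (m : ℕ) : Set (FreeGroup Bool) :=
  {(FreeGroup.of true * FreeGroup.of false) ^ m * FreeGroup.of true *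
    ((FreeGroup.of false * FreeGroup.of true) ^ m * FreeGroup.of false)⁻¹}

/-- The Artin group of the dihedral type `I₂(2 * m + 1)`: two generators whose alternating words of
length `2 * m + 1` agree. -/
abbrev OddDihedralArtin (m : ℕ) : Type := PresentedGroup (oddDihedralRels m)

theorem oddDihedralRels_one : oddDihedralRels 1 = braidRels := by
  simp only [oddDihedralRels, braidRels, pow_one]

namespace OddDihedralArtin

variable {m : ℕ}

theorem lift_oddDihedralRels_eq_one_iff {H : Type*} [Group H] {f : Bool → H} :
    (∀ r ∈ oddDihedralRels m, FreeGroup.lift f r = 1) ↔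
      (f true * f false) ^ m * f true = (f false * f true) ^ m * f false := by
  simp only [oddDihedralRels, Set.mem_singleton_iff, forall_eq, map_mul, map_pow, map_inv,
    FreeGroup.lift_apply_of, mul_inv_eq_one]

/-- The homomorphism from `G(2 * m + 1; 2)` that sends the even generators to `x` and the odd ones
to `y`. -/
def ofGpq (m : ℕ) : Gpq (2 * m + 1) 2 →* OddDihedralArtin m :=
  let x : OddDihedralArtin m := PresentedGroup.of true
  let y : OddDihedralArtin m := PresentedGroup.of false
  Gpq.lift ((x * y) ^ m * x) (alternate x y) (prod_reverse_range_alternate x y m).symm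
    (alternate_periodic x y)
    (mod_cast semiconjBy_alternate
      (lift_oddDihedralRels_eq_one_iff.1 lift_presentedGroup_of_eq_one))

/-- The homomorphism to `G(2 * m + 1; 2)` that sends `x` to `a 0` and `y` to `a 1`. -/
def toGpq (m : ℕ) : OddDihedralArtin m →* Gpq (2 * m + 1) 2 :=
  PresentedGroup.toGroup (f := fun b => cond b (Gpq.gen 0) (Gpq.gen 1))
    (lift_oddDihedralRels_eq_one_iff.2 Gpq.gen_artin_relation)

theorem ofGpq_gen (k : ℤ) :
    ofGpq m (Gpq.gen k) = alternate (PresentedGroup.of true) (PresentedGroup.of false) k := by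
  rw [ofGpq, Gpq.lift_gen]

theorem toGpq_comp_ofGpq : (toGpq m).comp (ofGpq m) = MonoidHom.id _ := by
  refine Gpq.hom_ext fun k => ?_
  rw [MonoidHom.comp_apply, ofGpq_gen, MonoidHom.id_apply, Gpq.gen_eq_alternate]
  rcases Int.even_or_odd k with hk | hk
  · simp only [alternate_of_even _ _ hk, toGpq, PresentedGroup.toGroup.of, cond_true]
  · simp only [alternate_of_odd _ _ hk, toGpq, PresentedGroup.toGroup.of, cond_false]

theorem ofGpq_comp_toGpq : (ofGpq m).comp (toGpq m) = MonoidHom.id _ := by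
  apply PresentedGroup.ext
  rintro (_ | _)
  · simp [toGpq, ofGpq_gen, alternate_of_odd]
  · simp [toGpq, ofGpq_gen, alternate_of_even]

end OddDihedralArtin

open OddDihedralArtin in
theorem stmt_17_general (m : ℕ) : Nonempty (Gpq (2 * m + 1) 2 ≃* OddDihedralArtin m) :=
  ⟨(ofGpq m).toMulEquiv (toGpq m) toGpq_comp_ofGpq ofGpq_comp_toGpq⟩

/-- `G(3;2)` is isomorphic to the braid group `B(3)`. -/
theorem stmt_17 : Nonempty (Gpq 3 2 ≃* BraidThree) := by
  change Nonempty (Gpq 3 2 ≃* PresentedGroup braidRels)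
  rw [← oddDihedralRels_one]
  exact stmt_17_general 1
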